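/- arXiv:1611.06454 — 8 statements merged into one kernel-verified Lean document; each statement's English description precedes it below -/
import Mathlib

section
/- The algebra 𝔷₁^ℂ degenerates to 𝔑₉(1/2): the structure λ with table e₁e₂ = e₄, e₂e₁ = (1/2)e₄, e₂e₂ = e₃ lies in the closure of the GL(V)-orbit of the structure μ with table e₁e₁ = e₂, e₁e₂ = (1/2)e₃, e₂e₁ = e₃. -/
noncomputable section

/-- `V = ℂ⁴`. -/
abbrev V : Type := Fin 4 → ℂ

/-- The standard basis vectors `e₁, e₂, e₃, e₄` of `V` (indexed by `0, 1, 2, 3`). -/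
def e (i : Fin 4) : V := Pi.single i 1

/-- The `GL(V)`-orbit `O(μ)` of an algebra structure `μ` on `V`, for the action
`(g • μ)(x, y) = g (μ (g⁻¹ x) (g⁻¹ y))`. -/
def orbit (μ : V →L[ℂ] V →L[ℂ] V) : Set (V →L[ℂ] V →L[ℂ] V) :=
  {ν | ∃ g : V ≃L[ℂ] V, ∀ x y : V, ν x y = g (μ (g.symm x) (g.symm y))}

/-!
Let `μ` be the algebra `e₁e₁ = e₂`, `e₁e₂ = αe₃`, `e₂e₁ = e₃`. Its nonzero products in the basis
`f₁ = e₂ + e₄`, `f₂ = e₁`, `f₃ = e₂`, `f₄ = e₃` are `f₁f₂ = f₄`, `f₂f₁ = αf₄`, `f₂f₂ = f₃`, which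
form the table of `𝔑₉(α)`, together with `f₂f₃ = αf₄` and `f₃f₂ = f₄`. Giving `f₁, f₂, f₃, f₄`
the weights `0, 1, 2, 1`, the first three products preserve weights, while the last two land in
weight `1` instead of `3`. Rescaling each `fᵢ` by `t` to the power of its weight therefore fixes
the former and multiplies the latter by `t²`, which disappears as `t → 0`.
-/

open Filter Module Topology

instance neBot_comap_units_val_nhds_zero {𝕜 : Type*} [NontriviallyNormedField 𝕜] :
    (comap (Units.val : 𝕜ˣ → 𝕜) (𝓝 0)).NeBot := by
  have range_mem : Set.range (Units.val : 𝕜ˣ → 𝕜) ∈ 𝓝[≠] 0 :=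
    mem_of_superset self_mem_nhdsWithin fun t ht => ⟨Units.mk0 t ht, rfl⟩
  exact (NeBot.comap_of_range_mem inferInstance range_mem).mono (comap_mono nhdsWithin_le_nhds)

theorem repr_unitsSMul_bilinear {𝕜 E ι : Type*} [NormedField 𝕜] [NormedAddCommGroup E]
    [NormedSpace 𝕜 E] (b : Basis ι 𝕜 E) (u : ι → 𝕜ˣ) (μ : E →L[𝕜] E →L[𝕜] E) (i j k : ι) :
    (b.unitsSMul u).repr (μ (b.unitsSMul u i) (b.unitsSMul u j)) k =
      u i * u j / u k * b.repr (μ (b i) (b j)) k := by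
  simp only [Basis.repr_unitsSMul, Basis.unitsSMul_apply, Units.smul_def, map_smul,
    smul_apply, Finsupp.smul_apply, smul_eq_mul, Units.val_inv_eq_inv_val]
  ring

section Convergence

variable {𝕜 E F ι X : Type*} [NontriviallyNormedField 𝕜] [CompleteSpace 𝕜] [Finite ι]
  [NormedAddCommGroup E] [NormedSpace 𝕜 E] [NormedAddCommGroup F] [NormedSpace 𝕜 F]

theorem equivFunL_symm_single [DecidableEq ι] (b : Basis ι 𝕜 E) (i : ι) :
    b.equivFunL.symm (Pi.single i 1) = b i := by
  rw [← Finsupp.single_eq_pi_single, ← b.repr_self, b.equivFunL_symm_apply_repr]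

theorem tendsto_clm_iff_forall_basis (b : Basis ι 𝕜 E) {l : Filter X}
    {f : X → E →L[𝕜] F} {g : E →L[𝕜] F} :
    Tendsto f l (𝓝 g) ↔ ∀ i, Tendsto (fun x => f x (b i)) l (𝓝 (g (b i))) := by
  classical
  have := Fintype.ofFinite ι
  let evalBasis : (E →L[𝕜] F) ≃L[𝕜] (ι → F) :=
    (b.equivFunL.arrowCongr (1 : F ≃L[𝕜] F)).trans (ContinuousLinearEquiv.piRing ι)
  have evalBasis_apply (h : E →L[𝕜] F) (i : ι) : evalBasis h i = h (b i) :=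
    congrArg h (equivFunL_symm_single b i)
  simp only [evalBasis.toHomeomorph.isInducing.tendsto_nhds_iff, tendsto_pi_nhds,
    Function.comp_apply, ContinuousLinearEquiv.coe_toHomeomorph, evalBasis_apply]

end Convergence

section Degeneration

variable {μ lam : V →L[ℂ] V →L[ℂ] V}

theorem mem_closure_orbit_of_tendsto_basis {X : Type*} {l : Filter X} [l.NeBot]
    (b : X → Basis (Fin 4) ℂ V)
    (h : ∀ i j, Tendsto (fun t => (b t).equivFun (μ (b t i) (b t j))) l (𝓝 (lam (e i) (e j)))) :
    lam ∈ closure (orbit μ) := by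
  let ν (t : X) : V →L[ℂ] V →L[ℂ] V :=
    (b t).equivFunL.arrowCongr ((b t).equivFunL.arrowCongr (b t).equivFunL) μ
  have ν_mem (t : X) : ν t ∈ orbit μ := ⟨(b t).equivFunL, fun _ _ => rfl⟩
  have ν_apply_e (t : X) (i j : Fin 4) :
      ν t (e i) (e j) = (b t).equivFun (μ (b t i) (b t j)) := by
    have symm_e (k : Fin 4) : (b t).equivFunL.symm (e k) = b t k := equivFunL_symm_single (b t) k
    simp only [ν, ContinuousLinearEquiv.arrowCongr_apply, symm_e]
    rfl
  have ν_tendsto : Tendsto ν l (𝓝 lam) := by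
    simpa only [tendsto_clm_iff_forall_basis (Pi.basisFun ℂ (Fin 4)), Pi.basisFun_apply,
      ← e.eq_def, ν_apply_e] using h
  exact mem_closure_of_tendsto ν_tendsto (Eventually.of_forall ν_mem)

theorem mem_closure_orbit_of_weights (b : Basis (Fin 4) ℂ V) (w : Fin 4 → ℤ)
    (weight_le : ∀ i j k, b.equivFun (μ (b i) (b j)) k ≠ 0 → w k ≤ w i + w j)
    (hlam : ∀ i j k, lam (e i) (e j) k =
      if w k = w i + w j then b.equivFun (μ (b i) (b j)) k else 0) :
    lam ∈ closure (orbit μ) := by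
  refine mem_closure_orbit_of_tendsto_basis (l := comap (Units.val : ℂˣ → ℂ) (𝓝 0))
    (fun t => b.unitsSMul fun m => t ^ w m) fun i j => tendsto_pi_nhds.2 fun k => ?_
  have rescaled_eq (t : ℂˣ) :
      (b.unitsSMul fun m => t ^ w m).equivFun
          (μ (b.unitsSMul (fun m => t ^ w m) i) (b.unitsSMul (fun m => t ^ w m) j)) k =
        (t : ℂ) ^ (w i + w j - w k) * b.equivFun (μ (b i) (b j)) k := by
    simp only [Basis.equivFun_apply, repr_unitsSMul_bilinear, Units.val_zpow_eq_zpow_val,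
      zpow_sub₀ t.ne_zero, zpow_add₀ t.ne_zero]
  simp only [rescaled_eq, hlam]
  by_cases hc : b.equivFun (μ (b i) (b j)) k = 0
  · simp only [hc, mul_zero, ite_self, tendsto_const_nhds]
  have exponent_nonneg : 0 ≤ w i + w j - w k := sub_nonneg.2 (weight_le i j k hc)
  have zpow_tendsto : Tendsto (fun t : ℂˣ => (t : ℂ) ^ (w i + w j - w k))
      (comap Units.val (𝓝 0)) (𝓝 (if w k = w i + w j then 1 else 0)) := by
    simpa only [zero_zpow_eq, sub_eq_zero, eq_comm, Function.comp_def] using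
      (continuousAt_zpow₀ (0 : ℂ) _ (.inr exponent_nonneg)).tendsto.comp tendsto_comap
  simpa only [ite_mul, one_mul, zero_mul] using zpow_tendsto.mul_const _

end Degeneration

/-- The basis `e₂ + e₄, e₁, e₂, e₃` of `V`, in which the products of `𝔑₉(α)` appear among those of
the algebra `e₁e₁ = e₂`, `e₁e₂ = αe₃`, `e₂e₁ = e₃`. It is encoded by its coordinate map. -/
def adaptedBasis : Basis (Fin 4) ℂ V :=
  Basis.ofEquivFun
    { toFun x := ![x 3, x 0, x 1 - x 3, x 2]
      invFun y := ![y 1, y 0 + y 2, y 3, y 0]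
      map_add' x y := by ext i; fin_cases i <;> simp; ring
      map_smul' c x := by ext i; fin_cases i <;> simp; ring
      left_inv x := by ext i; fin_cases i <;> simp
      right_inv y := by ext i; fin_cases i <;> simp }

theorem adaptedBasis_equivFun (x : V) :
    adaptedBasis.equivFun x = ![x 3, x 0, x 1 - x 3, x 2] := by
  simp [adaptedBasis]

theorem adaptedBasis_apply (i : Fin 4) : adaptedBasis i = ![e 1 + e 3, e 0, e 1, e 2] i := by
  refine adaptedBasis.equivFun.injective ?_
  ext k
  rw [Basis.equivFun_self, adaptedBasis_equivFun]
  fin_cases i <;> fin_cases k <;> simp [e]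

theorem adaptedBasis_equivFun_mul (α : ℂ) (μ : V →L[ℂ] V →L[ℂ] V)
    (hμ : ∀ i j : Fin 4, μ (e i) (e j) =
    (![
      ![e 1, α • e 2, 0, 0],
      ![e 2, 0, 0, 0],
      ![0, 0, 0, 0],
      ![0, 0, 0, 0]
     ] : Fin 4 → Fin 4 → V) i j) (i j : Fin 4) :
    adaptedBasis.equivFun (μ (adaptedBasis i) (adaptedBasis j)) =
    (![
      ![0, e 3, 0, 0],
      ![α • e 3, e 2, α • e 3, 0],
      ![0, e 3, 0, 0],
      ![0, 0, 0, 0]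
     ] : Fin 4 → Fin 4 → V) i j := by
  rw [adaptedBasis_apply, adaptedBasis_apply, adaptedBasis_equivFun]
  ext k
  fin_cases i <;> fin_cases j <;> fin_cases k <;> simp [hμ] <;> simp [e]

theorem stmt6_general (α : ℂ) (μ lam : V →L[ℂ] V →L[ℂ] V)
    (hμ : ∀ i j : Fin 4, μ (e i) (e j) =
    (![
      ![e 1, α • e 2, 0, 0],
      ![e 2, 0, 0, 0],
      ![0, 0, 0, 0],
      ![0, 0, 0, 0]
     ] : Fin 4 → Fin 4 → V) i j)
    (hlam : ∀ i j : Fin 4, lam (e i) (e j) =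
    (![
      ![0, e 3, 0, 0],
      ![α • e 3, e 2, 0, 0],
      ![0, 0, 0, 0],
      ![0, 0, 0, 0]
     ] : Fin 4 → Fin 4 → V) i j) :
    lam ∈ closure (orbit μ) := by
  refine mem_closure_orbit_of_weights adaptedBasis ![0, 1, 2, 1] (fun i j k => ?weight_le)
    fun i j k => ?limit
  all_goals rw [adaptedBasis_equivFun_mul α μ hμ]
  case weight_le => fin_cases i <;> fin_cases j <;> fin_cases k <;> simp [e]
  case limit =>
    rw [hlam]
    fin_cases i <;> fin_cases j <;> fin_cases k <;> simp [e]

/-- 𝔷₁^ℂ (e₁e₁ = e₂, e₁e₂ = ½e₃, e₂e₁ = e₃) degenerates to 𝔑₉(1/2) (e₁e₂ = e₄, e₂e₁ = ½e₄, e₂e₂ = e₃). -/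
theorem stmt6 (μ lam : V →L[ℂ] V →L[ℂ] V)
    (hμ : ∀ i j : Fin 4, μ (e i) (e j) =
    (![
      ![e 1, (1/2 : ℂ) • e 2, 0, 0],
      ![e 2, 0, 0, 0],
      ![0, 0, 0, 0],
      ![0, 0, 0, 0]
     ] : Fin 4 → Fin 4 → V) i j)
    (hlam : ∀ i j : Fin 4, lam (e i) (e j) =
    (![
      ![0, e 3, 0, 0],
      ![(1/2 : ℂ) • e 3, e 2, 0, 0],
      ![0, 0, 0, 0],
      ![0, 0, 0, 0]
     ] : Fin 4 → Fin 4 → V) i j) :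
    lam ∈ closure (orbit μ) := by
  exact stmt6_general (1/2) μ lam hμ hlam
end
end

section
/- The algebra 𝔷₁ degenerates to 𝔷₂: the structure λ with table e₁e₁ = e₃, e₁e₂ = e₄, e₁e₃ = e₄, e₃e₁ = 2e₄ lies in the closure of the GL(V)-orbit of the structure μ with table e₁e₁ = e₂, e₁e₂ = e₃, e₁e₃ = e₄, e₂e₁ = 2e₃, e₂e₂ = 3e₄, e₃e₁ = 3e₄. -/
noncomputable section

/-!
In the basis `E₁ = t e₁`, `E₂ = 3t² e₂ + e₃ + (2t²)⁻¹ e₄`, `E₃ = t² e₂`, `E₄ = t³ e₃`, for `t ≠ 0`,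
the structure constants of `𝔷₁` are polynomials in `t` whose values at `t = 0` are the structure
constants of `𝔷₂`. Here `E₁E₁ = E₃`, `E₁E₃ = E₄` and `E₃E₁ = 2E₄`, while
`E₁E₂ = E₄ + (2t³ e₃ + t e₄)` and `E₂E₁ = 3(2t³ e₃ + t e₄)`; the coefficients of `E₂` are chosen so
that `2t³ e₃ + t e₄ = 2t³ (E₂ - 3E₃)` vanishes in the limit. All other products are multiples of
`t⁴ e₄ = 2t⁶ (E₂ - 3E₃) - 2t³ E₄`, which vanishes too.
-/

open Module Filter Topology

section MulTable

variable {𝕜 E ι : Type*} [NontriviallyNormedField 𝕜] [NormedAddCommGroup E] [NormedSpace 𝕜 E]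

/-- The multiplication table of an algebra structure on `E` in the basis `b`, as a linear function
of the structure. Its entries are the products themselves rather than their coordinates. -/
def mulTable (b : Basis ι 𝕜 E) : (E →L[𝕜] E →L[𝕜] E) →ₗ[𝕜] ι → ι → E where
  toFun μ i j := μ (b i) (b j)
  map_add' _ _ := rfl
  map_smul' _ _ := rfl

theorem mulTable_apply (b : Basis ι 𝕜 E) (μ : E →L[𝕜] E →L[𝕜] E) (i j : ι) :
    mulTable b μ i j = μ (b i) (b j) :=
  rfl

theorem mulTable_injective (b : Basis ι 𝕜 E) : Function.Injective (mulTable b) := by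
  intro μ ν h
  refine ContinuousLinearMap.coe_injective (b.ext fun i ↦ ?_)
  exact ContinuousLinearMap.coe_injective (b.ext fun j ↦ congr_fun₂ h i j)

theorem isInducing_mulTable [CompleteSpace 𝕜] [Finite ι] (b : Basis ι 𝕜 E) :
    IsInducing (mulTable b) := by
  have := b.finiteDimensional_of_finite
  exact (LinearMap.isClosedEmbedding_of_injective
    (LinearMap.ker_eq_bot.mpr (mulTable_injective b))).isInducing

theorem mulTable_arrowCongr (b b' : Basis ι 𝕜 E) (g : E ≃L[𝕜] E) (hg : ∀ i, g (b' i) = b i)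
    (μ : E →L[𝕜] E →L[𝕜] E) (i j : ι) :
    mulTable b (g.arrowCongr (g.arrowCongr g) μ) i j = g (mulTable b' μ i j) := by
  simp [mulTable_apply, ← hg]

end MulTable

theorem arrowCongr_mem_orbit (μ : V →L[ℂ] V →L[ℂ] V) (g : V ≃L[ℂ] V) :
    g.arrowCongr (g.arrowCongr g) μ ∈ orbit μ :=
  ⟨g, fun _ _ ↦ rfl⟩

theorem mem_image_mulTable_orbit {μ : V →L[ℂ] V →L[ℂ] V} {E : Fin 4 → V}
    (hE : LinearIndependent ℂ E) {c : Fin 4 → Fin 4 → V}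
    (hc : ∀ i j, μ (E i) (E j) = Fintype.linearCombination ℂ E (c i j)) :
    c ∈ mulTable (Pi.basisFun ℂ (Fin 4)) '' orbit μ := by
  let b : Basis (Fin 4) ℂ V := basisOfLinearIndependentOfCardEqFinrank hE (by simp)
  have hb : ⇑b = E := coe_basisOfLinearIndependentOfCardEqFinrank hE _
  let g : V ≃L[ℂ] V := b.equivFun.toContinuousLinearEquiv
  have hg (i : Fin 4) : g (b i) = Pi.basisFun ℂ (Fin 4) i := by
    simp [g, Finsupp.single_eq_pi_single]
  refine ⟨_, arrowCongr_mem_orbit μ g, ?_⟩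
  funext i j
  rw [mulTable_arrowCongr _ b g hg, mulTable_apply, hb, hc, Fintype.linearCombination_apply, ← hb,
    ← b.equivFun_symm_apply]
  exact b.equivFun.apply_symm_apply (c i j)

theorem mem_closure_orbit_of_tendsto {α : Type*} {l : Filter α} [l.NeBot]
    {μ lam : V →L[ℂ] V →L[ℂ] V} {E : α → Fin 4 → V} {c : α → Fin 4 → Fin 4 → V}
    (hE : ∀ᶠ t in l, LinearIndependent ℂ (E t))
    (hc : ∀ᶠ t in l, ∀ i j, μ (E t i) (E t j) = Fintype.linearCombination ℂ (E t) (c t i j))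
    (hlim : Tendsto c l (𝓝 fun i j ↦ lam (e i) (e j))) :
    lam ∈ closure (orbit μ) := by
  have hlam : mulTable (Pi.basisFun ℂ (Fin 4)) lam = fun i j ↦ lam (e i) (e j) := by
    funext i j
    simp only [mulTable_apply, Pi.basisFun_apply, e]
  rw [(isInducing_mulTable (Pi.basisFun ℂ (Fin 4))).closure_eq_preimage_closure_image,
    Set.mem_preimage, hlam]
  refine mem_closure_of_tendsto hlim ?_
  filter_upwards [hE, hc] with t hEt hct
  exact mem_image_mulTable_orbit hEt hct

/-- The multiplication table of `𝔷₁` in the standard basis. -/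
def z₁Table : Fin 4 → Fin 4 → V :=
  ![![e 1, e 2, e 3, 0],
    ![(2 : ℂ) • e 2, (3 : ℂ) • e 3, 0, 0],
    ![(3 : ℂ) • e 3, 0, 0, 0],
    ![0, 0, 0, 0]]

/-- The multiplication table of `𝔷₂` in the standard basis. -/
def z₂Table : Fin 4 → Fin 4 → V :=
  ![![e 2, e 3, e 3, 0],
    ![0, 0, 0, 0],
    ![(2 : ℂ) • e 3, 0, 0, 0],
    ![0, 0, 0, 0]]

/-- The family of vectors `E₁, …, E₄` along which `𝔷₁` degenerates to `𝔷₂` as `t → 0`. It is a basis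
only for `t ≠ 0`. -/
def degenerationBasis (t : ℂ) : Fin 4 → V :=
  ![t • e 0, (3 * t ^ 2) • e 1 + e 2 + (2 * t ^ 2)⁻¹ • e 3, t ^ 2 • e 1, t ^ 3 • e 2]

/-- The coordinates of `2t³ e₃ + t e₄` in `degenerationBasis t`. -/
def mixedCoords (t : ℂ) : V := (2 * t ^ 3) • (e 1 - (3 : ℂ) • e 2)

/-- The coordinates of `t⁴ e₄` in `degenerationBasis t`. -/
def topCoords (t : ℂ) : V := t ^ 3 • mixedCoords t - (2 * t ^ 3) • e 3

/-- The multiplication table of `𝔷₁` in `degenerationBasis t`, each product being given by its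
coordinates in that basis. -/
def degenerationTable (t : ℂ) : Fin 4 → Fin 4 → V :=
  ![![e 2, e 3 + mixedCoords t, e 3, topCoords t],
    ![(3 : ℂ) • mixedCoords t, (27 : ℂ) • topCoords t, (9 : ℂ) • topCoords t, 0],
    ![(2 : ℂ) • e 3, (9 : ℂ) • topCoords t, (3 : ℂ) • topCoords t, 0],
    ![(3 : ℂ) • topCoords t, 0, 0, 0]]

theorem linearCombination_e {M : Type*} [AddCommMonoid M] [Module ℂ M] (v : Fin 4 → M) (i : Fin 4) :
    Fintype.linearCombination ℂ v (e i) = v i := by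
  simp [e]

theorem linearCombination_mixedCoords {t : ℂ} (ht : t ≠ 0) :
    Fintype.linearCombination ℂ (degenerationBasis t) (mixedCoords t) =
      (2 * t ^ 3) • e 2 + t • e 3 := by
  simp only [mixedCoords, map_smul, map_sub, linearCombination_e]
  simp only [degenerationBasis, Matrix.cons_val]
  match_scalars <;> field_simp
  ring

theorem linearCombination_topCoords {t : ℂ} (ht : t ≠ 0) :
    Fintype.linearCombination ℂ (degenerationBasis t) (topCoords t) = t ^ 4 • e 3 := by
  simp only [topCoords, map_smul, map_sub, linearCombination_e, linearCombination_mixedCoords ht]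
  simp only [degenerationBasis, Matrix.cons_val]
  module

theorem linearIndependent_degenerationBasis {t : ℂ} (ht : t ≠ 0) :
    LinearIndependent ℂ (degenerationBasis t) := by
  rw [Fintype.linearIndependent_iff]
  intro a ha
  have coord (k : Fin 4) : (∑ i, a i • degenerationBasis t i) k = 0 := congr_fun ha k
  have h₀ : a 0 = 0 := by simpa [Fin.sum_univ_four, degenerationBasis, e, ht] using coord 0
  have h₁ : a 1 = 0 := by simpa [Fin.sum_univ_four, degenerationBasis, e, ht] using coord 3
  have h₂ : a 2 = 0 := by simpa [Fin.sum_univ_four, degenerationBasis, e, ht, h₁] using coord 1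
  have h₃ : a 3 = 0 := by simpa [Fin.sum_univ_four, degenerationBasis, e, ht, h₁] using coord 2
  intro i
  fin_cases i <;> assumption

theorem mul_degenerationBasis {μ : V →L[ℂ] V →L[ℂ] V} (hμ : ∀ i j, μ (e i) (e j) = z₁Table i j)
    {t : ℂ} (ht : t ≠ 0) (i j : Fin 4) :
    μ (degenerationBasis t i) (degenerationBasis t j) =
      Fintype.linearCombination ℂ (degenerationBasis t) (degenerationTable t i j) := by
  fin_cases i <;> fin_cases j <;>
    simp only [degenerationTable, Fin.zero_eta, Fin.mk_one, Fin.reduceFinMk, Matrix.cons_val,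
      map_add, map_smul, map_zero, linearCombination_e, linearCombination_mixedCoords ht,
      linearCombination_topCoords ht] <;>
    simp only [degenerationBasis, Matrix.cons_val, map_add, map_smul, add_apply, smul_apply, hμ,
      z₁Table, smul_zero, add_zero] <;>
    match_scalars <;> field_simp <;> ring

theorem continuous_degenerationTable : Continuous degenerationTable := by
  unfold degenerationTable topCoords mixedCoords
  fun_prop

theorem degenerationTable_zero : degenerationTable 0 = z₂Table := by
  simp [degenerationTable, topCoords, mixedCoords, z₂Table]

/-- 𝔷₁ degenerates to 𝔷₂. -/
theorem stmt7 (μ lam : V →L[ℂ] V →L[ℂ] V)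
    (hμ : ∀ i j : Fin 4, μ (e i) (e j) =
    (![
      ![e 1, e 2, e 3, 0],
      ![(2 : ℂ) • e 2, (3 : ℂ) • e 3, 0, 0],
      ![(3 : ℂ) • e 3, 0, 0, 0],
      ![0, 0, 0, 0]
     ] : Fin 4 → Fin 4 → V) i j)
    (hlam : ∀ i j : Fin 4, lam (e i) (e j) =
    (![
      ![e 2, e 3, e 3, 0],
      ![0, 0, 0, 0],
      ![(2 : ℂ) • e 3, 0, 0, 0],
      ![0, 0, 0, 0]
     ] : Fin 4 → Fin 4 → V) i j) :
    lam ∈ closure (orbit μ) := by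
  have hlam' : (fun i j ↦ lam (e i) (e j)) = degenerationTable 0 :=
    (funext₂ hlam).trans degenerationTable_zero.symm
  have ht : ∀ᶠ t : ℂ in 𝓝[≠] 0, t ≠ 0 := self_mem_nhdsWithin
  refine mem_closure_orbit_of_tendsto (l := 𝓝[≠] 0)
    (ht.mono fun _ ↦ linearIndependent_degenerationBasis)
    (ht.mono fun _ ↦ mul_degenerationBasis hμ) ?_
  rw [hlam']
  exact (continuous_degenerationTable.tendsto 0).mono_left nhdsWithin_le_nhds
end
end

section
/- The algebra 𝔷₅ degenerates to 𝔷₄: the structure λ with table e₁e₂ = e₃, e₁e₃ = e₄, e₂e₁ = −e₃ lies in the closure of the GL(V)-orbit of the structure μ with table e₁e₂ = e₃, e₁e₃ = e₄, e₂e₁ = −e₃, e₂e₂ = e₄. -/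
noncomputable section

/-!
The line from `𝔷₄` to `𝔷₅` consists of the structures obtained from `𝔷₅` by replacing `e₂e₂ = e₄`
with `e₂e₂ = t e₄`. If `t ≠ 0`, this structure has in the basis `e₁, t⁻¹e₂, t⁻¹e₃, t⁻¹e₄` the
structure constants of `𝔷₅`, so it lies in the orbit of `𝔷₅`; let `t → 0`.
-/

open Module Topology

lemma mem_closure_of_forall_lineMap_mem {𝕜 E P : Type*} [NontriviallyNormedField 𝕜]
    [AddCommGroup E] [Module 𝕜 E] [TopologicalSpace E] [ContinuousSMul 𝕜 E]
    [AddTorsor E P] [TopologicalSpace P] [IsTopologicalAddTorsor P]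
    {s : Set P} {a b : P} (h : ∀ t : 𝕜, t ≠ 0 → AffineMap.lineMap a b t ∈ s) :
    a ∈ closure s := by
  have tendsto_lineMap : Filter.Tendsto (AffineMap.lineMap (k := 𝕜) a b) (𝓝[≠] 0) (𝓝 a) :=
    (AffineMap.lineMap_continuous.tendsto' 0 a (AffineMap.lineMap_apply_zero a b)).mono_left
      nhdsWithin_le_nhds
  exact mem_closure_of_tendsto tendsto_lineMap (eventually_mem_nhdsWithin.mono h)

section Orbit

variable {ι : Type*} {μ ν : V →L[ℂ] V →L[ℂ] V}

lemma mem_orbit_of_repr_eq (b b' : Basis ι ℂ V)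
    (h : ∀ i j, b'.repr (ν (b' i) (b' j)) = b.repr (μ (b i) (b j))) : ν ∈ orbit μ := by
  let g : V ≃ₗ[ℂ] V := b.repr.trans b'.repr.symm
  have g_symm_basis (i : ι) : g.symm (b' i) = b i := by simp [g]
  have eq_transport : ν.toLinearMap₁₂ =
      (μ.toLinearMap₁₂.compl₁₂ g.symm.toLinearMap g.symm.toLinearMap).compr₂ g.toLinearMap := by
    refine LinearMap.ext_basis b' b' fun i j => ?_
    have map_product : ν (b' i) (b' j) = g (μ (b i) (b j)) := by simp [g, ← h]
    simpa [g_symm_basis] using map_product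
  exact ⟨g.toContinuousLinearEquiv, LinearMap.congr_fun₂ eq_transport⟩

lemma mem_orbit_of_unitsSMul (b : Basis ι ℂ V) (w : ι → ℂˣ)
    (h : ∀ i j k, (w i * w j : ℂ) * b.repr (ν (b i) (b j)) k = w k * b.repr (μ (b i) (b j)) k) :
    ν ∈ orbit μ := by
  refine mem_orbit_of_repr_eq b (b.unitsSMul w) fun i j => Finsupp.ext fun k => ?_
  rw [Basis.repr_unitsSMul, inv_smul_eq_iff]
  simpa [Basis.unitsSMul_apply, Units.smul_def, mul_assoc, mul_left_comm] using h i j k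

end Orbit

/-- 𝔷₅ degenerates to 𝔷₄. -/
theorem stmt9 (μ lam : V →L[ℂ] V →L[ℂ] V)
    (hμ : ∀ i j : Fin 4, μ (e i) (e j) =
    (![
      ![0, e 2, e 3, 0],
      ![-e 2, e 3, 0, 0],
      ![0, 0, 0, 0],
      ![0, 0, 0, 0]
     ] : Fin 4 → Fin 4 → V) i j)
    (hlam : ∀ i j : Fin 4, lam (e i) (e j) =
    (![
      ![0, e 2, e 3, 0],
      ![-e 2, 0, 0, 0],
      ![0, 0, 0, 0],
      ![0, 0, 0, 0]
     ] : Fin 4 → Fin 4 → V) i j) :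
    lam ∈ closure (orbit μ) := by
  refine mem_closure_of_forall_lineMap_mem (𝕜 := ℂ) (b := μ) fun t ht => ?_
  have lineMap_table (i j : Fin 4) : AffineMap.lineMap lam μ t (e i) (e j) =
      (![
        ![0, e 2, e 3, 0],
        ![-e 2, t • e 3, 0, 0],
        ![0, 0, 0, 0],
        ![0, 0, 0, 0]
       ] : Fin 4 → Fin 4 → V) i j := by
    simp only [AffineMap.lineMap_apply_module, add_apply, smul_apply, hμ, hlam]
    fin_cases i <;> fin_cases j <;> simp [← add_smul, ← neg_add]
  let u : ℂˣ := Units.mk0 t ht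
  refine mem_orbit_of_unitsSMul (Pi.basisFun ℂ (Fin 4)) ![1, u⁻¹, u⁻¹, u⁻¹] fun i j k => ?_
  have basis_eq (l : Fin 4) : Pi.basisFun ℂ (Fin 4) l = e l := Pi.basisFun_apply ℂ (Fin 4) l
  simp only [basis_eq, Pi.basisFun_repr, lineMap_table, hμ]
  fin_cases i <;> fin_cases j <;> fin_cases k <;> simp [e, u, ht]
end
end

section
/- For every γ ∈ ℂ, the algebra 𝔑₂(γ) degenerates to 𝔑₂(1): the structure λ with table e₁e₁ = e₃, e₁e₂ = e₄, e₂e₁ = −e₃, e₂e₂ = −e₄ lies in the closure of the GL(V)-orbit of the structure μ_γ with table e₁e₁ = e₃, e₁e₂ = e₄, e₂e₁ = −γe₃, e₂e₂ = −e₄. -/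
noncomputable section

/-!
Write `x = x₀ e₁ + x₁ e₂ + x₂ e₃ + x₃ e₄`. In `𝔑₂(γ)` the product is
`xy = (x₀ - γ x₁) y₀ e₃ + (x₀ - x₁) y₁ e₄`. In the basis `e₁, -e₁ + t e₂, e₃, -e₃ + t e₄` the left
factors become `x₀ - x₁ - γ t x₁` and `x₀ - x₁ - t x₁`, so they merge into `x₀ - x₁` as `t → 0`.
In fact the transported product is affine in `t`: the orbit of `𝔑₂(γ)` contains a whole punctured
line through `𝔑₂(1)`.
-/

open Filter Topology

theorem mem_closure_of_forall_add_smul_mem {𝕜 E : Type*} [NontriviallyNormedField 𝕜]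
    [AddCommGroup E] [Module 𝕜 E] [TopologicalSpace E] [ContinuousAdd E] [ContinuousSMul 𝕜 E]
    {s : Set E} {a v : E} (h : ∀ t : 𝕜, t ≠ 0 → a + t • v ∈ s) : a ∈ closure s := by
  have line_continuous : Continuous fun t : 𝕜 => a + t • v := by fun_prop
  have line_tendsto : Tendsto (fun t : 𝕜 => a + t • v) (𝓝[≠] 0) (𝓝 a) :=
    (line_continuous.tendsto' 0 a (by simp)).mono_left nhdsWithin_le_nhds
  exact mem_closure_of_tendsto line_tendsto (eventually_mem_nhdsWithin.mono h)

theorem continuousBilinear_ext_basis {ι κ 𝕜 E F G : Type*} [NormedField 𝕜]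
    [AddCommGroup E] [Module 𝕜 E] [TopologicalSpace E]
    [AddCommGroup F] [Module 𝕜 F] [TopologicalSpace F]
    [AddCommGroup G] [Module 𝕜 G] [TopologicalSpace G] [IsTopologicalAddGroup G]
    [ContinuousConstSMul 𝕜 G] (b : Module.Basis ι 𝕜 E) (c : Module.Basis κ 𝕜 F)
    {f g : E →L[𝕜] F →L[𝕜] G} (h : ∀ i j, f (b i) (c j) = g (b i) (c j)) : f = g :=
  ContinuousLinearMap.coe_injective <| b.ext fun i =>
    ContinuousLinearMap.coe_injective <| c.ext fun j => h i j

theorem algebraStructure_ext {μ ν : V →L[ℂ] V →L[ℂ] V}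
    (h : ∀ i j, μ (e i) (e j) = ν (e i) (e j)) : μ = ν :=
  continuousBilinear_ext_basis (Pi.basisFun ℂ (Fin 4)) (Pi.basisFun ℂ (Fin 4))
    (by simpa only [Pi.basisFun_apply, e] using h)

/-- The coordinate functional `x ↦ x i` on `V`. -/
abbrev coord (i : Fin 4) : V →L[ℂ] ℂ := ContinuousLinearMap.proj i

/-- The algebra `𝔑₂(γ)`, given by the closed formula for its product. -/
def 𝔑₂ (γ : ℂ) : V →L[ℂ] V →L[ℂ] V :=
  (coord 0 - γ • coord 1).smulRight ((coord 0).smulRight (e 2)) +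
    (coord 0 - coord 1).smulRight ((coord 1).smulRight (e 3))

theorem 𝔑₂_apply (γ : ℂ) (x y : V) :
    𝔑₂ γ x y = ![0, 0, (x 0 - γ * x 1) * y 0, (x 0 - x 1) * y 1] := by
  ext k
  fin_cases k <;> simp [𝔑₂, e]

theorem 𝔑₂_apply_e (γ : ℂ) (i j : Fin 4) :
    𝔑₂ γ (e i) (e j) =
      (![![e 2, e 3, 0, 0],
         ![(-γ) • e 2, -e 3, 0, 0],
         ![0, 0, 0, 0],
         ![0, 0, 0, 0]] : Fin 4 → Fin 4 → V) i j := by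
  rw [𝔑₂_apply]
  ext k
  fin_cases i <;> fin_cases j <;> fin_cases k <;> simp [e]

/-- The passage from standard coordinates to coordinates in the basis
`e₁, -e₁ + t e₂, e₃, -e₃ + t e₄`. Its inverse sends the standard basis to that basis. -/
def toMovingBasis {R : Type*} [CommRing R] (t : Rˣ) : (Fin 4 → R) ≃ₗ[R] (Fin 4 → R) where
  toFun x := ![x 0 + ↑t⁻¹ * x 1, ↑t⁻¹ * x 1, x 2 + ↑t⁻¹ * x 3, ↑t⁻¹ * x 3]
  invFun x := ![x 0 - x 1, t * x 1, x 2 - x 3, t * x 3]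
  map_add' x y := by ext k; fin_cases k <;> simp <;> ring
  map_smul' c x := by ext k; fin_cases k <;> simp <;> ring
  left_inv x := by ext k; fin_cases k <;> simp
  right_inv x := by ext k; fin_cases k <;> simp

theorem toMovingBasis_apply {R : Type*} [CommRing R] (t : Rˣ) (x : Fin 4 → R) :
    toMovingBasis t x = ![x 0 + ↑t⁻¹ * x 1, ↑t⁻¹ * x 1, x 2 + ↑t⁻¹ * x 3, ↑t⁻¹ * x 3] :=
  rfl

theorem toMovingBasis_symm_apply {R : Type*} [CommRing R] (t : Rˣ) (x : Fin 4 → R) :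
    (toMovingBasis t).symm x = ![x 0 - x 1, t * x 1, x 2 - x 3, t * x 3] :=
  rfl

/-- The derivative in `t` of the product of `𝔑₂(γ)` written in the basis
`e₁, -e₁ + t e₂, e₃, -e₃ + t e₄`. -/
def degenerationDirection (γ : ℂ) : V →L[ℂ] V →L[ℂ] V :=
  -(coord 1).smulRight
    ((γ • (coord 0 - coord 1)).smulRight (e 2) + (coord 1).smulRight (e 2 + e 3))

theorem degenerationDirection_apply (γ : ℂ) (x y : V) :
    degenerationDirection γ x y =
      ![0, 0, -(x 1 * (γ * (y 0 - y 1) + y 1)), -(x 1 * y 1)] := by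
  ext k
  fin_cases k <;> simp [degenerationDirection, e]
  ring

theorem 𝔑₂_transport_toMovingBasis (γ : ℂ) (t : ℂˣ) (x y : V) :
    toMovingBasis t (𝔑₂ γ ((toMovingBasis t).symm x) ((toMovingBasis t).symm y)) =
      𝔑₂ 1 x y + (t : ℂ) • degenerationDirection γ x y := by
  simp only [toMovingBasis_apply, toMovingBasis_symm_apply, 𝔑₂_apply, degenerationDirection_apply]
  ext k
  fin_cases k <;> simp <;> field_simp <;> ring

theorem 𝔑₂_one_add_smul_mem_orbit (γ : ℂ) {t : ℂ} (ht : t ≠ 0) :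
    𝔑₂ 1 + t • degenerationDirection γ ∈ orbit (𝔑₂ γ) :=
  ⟨(toMovingBasis (Units.mk0 t ht)).toContinuousLinearEquiv, fun x y =>
    (𝔑₂_transport_toMovingBasis γ (Units.mk0 t ht) x y).symm⟩

theorem 𝔑₂_one_mem_closure_orbit (γ : ℂ) : 𝔑₂ 1 ∈ closure (orbit (𝔑₂ γ)) :=
  mem_closure_of_forall_add_smul_mem fun _ => 𝔑₂_one_add_smul_mem_orbit γ

/-- For every γ ∈ ℂ, 𝔑₂(γ) degenerates to 𝔑₂(1). -/
theorem stmt10 (γ : ℂ) (μ lam : V →L[ℂ] V →L[ℂ] V)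
    (hμ : ∀ i j : Fin 4, μ (e i) (e j) =
    (![
      ![e 2, e 3, 0, 0],
      ![(-γ) • e 2, -e 3, 0, 0],
      ![0, 0, 0, 0],
      ![0, 0, 0, 0]
     ] : Fin 4 → Fin 4 → V) i j)
    (hlam : ∀ i j : Fin 4, lam (e i) (e j) =
    (![
      ![e 2, e 3, 0, 0],
      ![-e 2, -e 3, 0, 0],
      ![0, 0, 0, 0],
      ![0, 0, 0, 0]
     ] : Fin 4 → Fin 4 → V) i j) :
    lam ∈ closure (orbit μ) := by
  obtain rfl : μ = 𝔑₂ γ := algebraStructure_ext fun i j => by rw [hμ, 𝔑₂_apply_e]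
  obtain rfl : lam = 𝔑₂ 1 := algebraStructure_ext fun i j => by rw [hlam, 𝔑₂_apply_e, neg_one_smul]
  exact 𝔑₂_one_mem_closure_orbit γ
end
end

section
/- The algebra 𝔑₂(1) degenerates to 𝔑₈: the structure λ with table e₂e₁ = e₄, e₂e₂ = e₃ lies in the closure of the GL(V)-orbit of the structure μ with table e₁e₁ = e₃, e₁e₂ = e₄, e₂e₁ = −e₃, e₂e₂ = −e₄. -/
noncomputable section

open Module

/-!
The two algebras are isomorphic, so no limit is needed. In `𝔑₂(1)` the product is
`x y = (x₁ - x₂) (y₁ e₃ + y₂ e₄)`, so `e₁ + e₂` annihilates `V` from the left. In the basis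
`e₁ + e₂, e₁, e₃, e₃ + e₄` the multiplication table becomes that of `𝔑₈`.
-/

section LeftAnnihilator

variable {R M : Type*} [CommRing R] [AddCommGroup M] [Module R M]

/-- The basis `b₁ + b₂, b₁, b₃, b₃ + b₄` obtained from `b₁, b₂, b₃, b₄`. When `b` is the standard
basis of `𝔑₂(1)`, the new vectors `f₁, f₂, f₃, f₄` satisfy `f₁ x = 0` for all `x`, `f₂ f₂ = f₃` and
`f₂ f₁ = f₄`. -/
def leftAnnihilatorBasis (b : Basis (Fin 4) R M) : Basis (Fin 4) R M :=
  b.map <| Matrix.toLinearEquiv b !![1, 1, 0, 0; 1, 0, 0, 0; 0, 0, 1, 1; 0, 0, 0, 1] <| by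
    simp [Matrix.det_succ_row_zero, Fin.sum_univ_succ, Fin.succAbove]

theorem coe_leftAnnihilatorBasis (b : Basis (Fin 4) R M) :
    ⇑(leftAnnihilatorBasis b) = ![b 0 + b 1, b 0, b 2, b 2 + b 3] := by
  ext j
  rw [leftAnnihilatorBasis, Basis.map_apply, Matrix.toLinearEquiv_apply, Matrix.toLin_self]
  fin_cases j <;> simp [Fin.sum_univ_four]

theorem leftAnnihilatorBasis_mul_leftAnnihilatorBasis {b : Basis (Fin 4) R M}
    {μ : M →ₗ[R] M →ₗ[R] M}
    (hμ : ∀ i j : Fin 4, μ (b i) (b j) =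
      (![![b 2, b 3, 0, 0], ![-b 2, -b 3, 0, 0], ![0, 0, 0, 0], ![0, 0, 0, 0]] :
        Fin 4 → Fin 4 → M) i j) (i j : Fin 4) :
    μ (leftAnnihilatorBasis b i) (leftAnnihilatorBasis b j) =
      (![![0, 0, 0, 0], ![leftAnnihilatorBasis b 3, leftAnnihilatorBasis b 2, 0, 0],
        ![0, 0, 0, 0], ![0, 0, 0, 0]] : Fin 4 → Fin 4 → M) i j := by
  have leftMul_one_eq_neg : μ (b 1) = -μ (b 0) :=
    b.ext fun j => by fin_cases j <;> simp [hμ]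
  rw [coe_leftAnnihilatorBasis]
  fin_cases i <;> fin_cases j <;> simp [leftMul_one_eq_neg, hμ]

end LeftAnnihilator

theorem equivFun_basis_eq_e (f : Basis (Fin 4) ℂ V) (i : Fin 4) : f.equivFun (f i) = e i := by
  rw [e, f.equivFun_apply, f.repr_self, Finsupp.single_eq_pi_single]

theorem coe_basisFun_eq_e : ⇑(Pi.basisFun ℂ (Fin 4)) = e :=
  funext (Pi.basisFun_apply ℂ (Fin 4))

theorem mem_orbit_of_basis {μ ν : V →L[ℂ] V →L[ℂ] V} (f : Basis (Fin 4) ℂ V)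
    (h : ∀ i j, f.equivFun (μ (f i) (f j)) = ν (e i) (e j)) : ν ∈ orbit μ := by
  let g : V ≃L[ℂ] V := f.equivFun.toContinuousLinearEquiv
  have intertwines : μ.toLinearMap₁₂.compr₂ g.toLinearMap =
      ν.toLinearMap₁₂.compl₁₂ g.toLinearMap g.toLinearMap := by
    refine LinearMap.ext_basis f f fun i j => ?_
    change f.equivFun (μ (f i) (f j)) = ν (f.equivFun (f i)) (f.equivFun (f j))
    rw [h, equivFun_basis_eq_e, equivFun_basis_eq_e]
  refine ⟨g, fun x y => ?_⟩
  simpa using (LinearMap.congr_fun₂ intertwines (g.symm x) (g.symm y)).symm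

theorem stmt11_general (μ lam : V →L[ℂ] V →L[ℂ] V)
    (hμ : ∀ i j : Fin 4, μ (e i) (e j) =
    (![
      ![e 2, e 3, 0, 0],
      ![-e 2, -e 3, 0, 0],
      ![0, 0, 0, 0],
      ![0, 0, 0, 0]
     ] : Fin 4 → Fin 4 → V) i j)
    (hlam : ∀ i j : Fin 4, lam (e i) (e j) =
    (![
      ![0, 0, 0, 0],
      ![e 3, e 2, 0, 0],
      ![0, 0, 0, 0],
      ![0, 0, 0, 0]
     ] : Fin 4 → Fin 4 → V) i j) :
    lam ∈ orbit μ := by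
  let f := leftAnnihilatorBasis (Pi.basisFun ℂ (Fin 4))
  have table : ∀ i j, μ (f i) (f j) =
      (![![0, 0, 0, 0], ![f 3, f 2, 0, 0], ![0, 0, 0, 0], ![0, 0, 0, 0]] :
        Fin 4 → Fin 4 → V) i j :=
    leftAnnihilatorBasis_mul_leftAnnihilatorBasis (μ := μ.toLinearMap₁₂)
      (by simpa only [coe_basisFun_eq_e, μ.toLinearMap₁₂_apply_apply_apply] using hμ)
  refine mem_orbit_of_basis f fun i j => ?_
  rw [table, hlam]
  fin_cases i <;> fin_cases j <;> simp [-Basis.equivFun_apply, equivFun_basis_eq_e]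

/-- 𝔑₂(1) degenerates to 𝔑₈. -/
theorem stmt11 (μ lam : V →L[ℂ] V →L[ℂ] V)
    (hμ : ∀ i j : Fin 4, μ (e i) (e j) =
    (![
      ![e 2, e 3, 0, 0],
      ![-e 2, -e 3, 0, 0],
      ![0, 0, 0, 0],
      ![0, 0, 0, 0]
     ] : Fin 4 → Fin 4 → V) i j)
    (hlam : ∀ i j : Fin 4, lam (e i) (e j) =
    (![
      ![0, 0, 0, 0],
      ![e 3, e 2, 0, 0],
      ![0, 0, 0, 0],
      ![0, 0, 0, 0]
     ] : Fin 4 → Fin 4 → V) i j) :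
    lam ∈ closure (orbit μ) :=
  subset_closure (stmt11_general μ lam hμ hlam)
end
end

section
/- For every α ∈ ℂ with α ≠ 0 and every β ∈ ℂ, the algebra 𝔑₃(α) degenerates to 𝔑₂^ℂ(β): the structure λ_β with table e₁e₁ = e₃, e₁e₂ = e₃, e₂e₂ = βe₃ lies in the closure of the GL(V)-orbit of the structure μ_α with table e₁e₁ = e₄, e₁e₂ = αe₄, e₂e₁ = −αe₄, e₂e₂ = e₄, e₃e₃ = e₄. -/
noncomputable section

/-!
Both products have the shape `x * y = (xᵀ A y) w` for a matrix `A` and a vector `w`. A change of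
basis replaces `A` by `Pᵀ A P` and `w` by `P⁻¹ w`. Invertible matrices sending `v` to `w ≠ 0` are
dense among all matrices sending `v` to `w`, so on passing to the closure of the orbit `P` may be
singular. It then suffices to find four vectors, the third of them `e₄`, whose Gram matrix for the
form of `𝔑₃(α)` is the matrix of `𝔑₂^ℂ(β)`.
-/

open Matrix Polynomial

section Perturbation

variable {n : Type*} [Fintype n] [DecidableEq n]

theorem finite_setOf_det_lineMap_eq_zero {R : Type*} [CommRing R] [IsDomain R]
    (P : Matrix n n R) {Q : Matrix n n R} (hQ : Q.det ≠ 0) :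
    {t : R | (AffineMap.lineMap P Q t).det = 0}.Finite := by
  let p : R[X] := ((X : R[X]) • (Q - P).map C + P.map C).det
  have eval_p (t : R) : p.eval t = (AffineMap.lineMap P Q t).det := by
    rw [AffineMap.lineMap_apply_module', ← coe_evalRingHom, RingHom.map_det]
    congr 1
    ext i j
    simp
  have p_ne_zero : p ≠ 0 := by
    intro hp
    apply hQ
    simpa [hp] using (eval_p 1).symm
  simpa only [IsRoot.def, eval_p] using finite_setOfPred_isRoot p_ne_zero

theorem exists_isUnit_mulVec_eq {K : Type*} [Field K] {v w : n → K} (hv : v ≠ 0) (hw : w ≠ 0) :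
    ∃ Q : Matrix n n K, IsUnit Q ∧ Q *ᵥ v = w := by
  let toSpan (u : n → K) (hu : u ≠ 0) := LinearEquiv.toSpanNonzeroSingleton K (n → K) u hu
  obtain ⟨g, hg⟩ :=
    Submodule.exists_linearEquiv_restrict_eq ((toSpan v hv).symm.trans (toSpan w hw))
  refine ⟨LinearMap.toMatrix' g.toLinearMap, ?_, ?_⟩
  · exact LinearMap.isUnit_toMatrix'_iff.2 ((Module.End.isUnit_iff _).2 g.bijective)
  · rw [LinearMap.toMatrix'_mulVec]
    calc g v = g (toSpan v hv 1) := by simp [toSpan]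
      _ = toSpan w hw 1 := by rw [← hg, LinearEquiv.trans_apply, LinearEquiv.symm_apply_apply]
      _ = w := by simp [toSpan]

theorem mem_closure_setOf_isUnit_and_mulVec_eq {𝕜 : Type*} [NontriviallyNormedField 𝕜]
    {P : Matrix n n 𝕜} {v w : n → 𝕜} (hPv : P *ᵥ v = w) (hw : w ≠ 0) :
    P ∈ closure {Q : Matrix n n 𝕜 | IsUnit Q ∧ Q *ᵥ v = w} := by
  have hv : v ≠ 0 := by
    rintro rfl
    exact hw (hPv ▸ mulVec_zero P)
  obtain ⟨Q, hQ, hQv⟩ := exists_isUnit_mulVec_eq hv hw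
  have hfin := finite_setOf_det_lineMap_eq_zero P ((isUnit_iff_isUnit_det Q).1 hQ).ne_zero
  have hcont : Continuous fun t : 𝕜 => AffineMap.lineMap P Q t := by
    simp only [AffineMap.lineMap_apply_module]
    fun_prop
  rw [← AffineMap.lineMap_apply_zero (k := 𝕜) P Q]
  refine map_mem_closure hcont (dense_univ.sdiff_finite hfin 0) fun t ht => ⟨?_, ?_⟩
  · exact (isUnit_iff_isUnit_det _).2 (isUnit_iff_ne_zero.2 ht.2)
  · rw [AffineMap.lineMap_apply_module, add_mulVec, smul_mulVec, smul_mulVec, hPv, hQv,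
      ← add_smul, sub_add_cancel, one_smul]

end Perturbation

section FormProduct

variable {n 𝕜 : Type*} [Fintype n] [DecidableEq n] [NontriviallyNormedField 𝕜] [CompleteSpace 𝕜]

/-- The algebra structure `x * y = (xᵀ A y) w` given by the bilinear form with matrix `A` and a
vector `w` spanning the products. It is bundled as a continuous bilinear map so that it lives in
the space where orbit closures are taken. -/
def formProduct (A : Matrix n n 𝕜) (w : n → 𝕜) : (n → 𝕜) →L[𝕜] (n → 𝕜) →L[𝕜] n → 𝕜 :=
  ((toBilin' A).compr₂ (LinearMap.toSpanSingleton 𝕜 (n → 𝕜) w)).toContinuousBilinearMap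

theorem formProduct_apply (A : Matrix n n 𝕜) (w x y : n → 𝕜) :
    formProduct A w x y = (x ⬝ᵥ A *ᵥ y) • w := by
  simp [formProduct, toBilin'_apply']

theorem eq_formProduct_of_apply_single {μ : (n → 𝕜) →L[𝕜] (n → 𝕜) →L[𝕜] n → 𝕜}
    {A : Matrix n n 𝕜} {w : n → 𝕜}
    (h : ∀ i j, μ (Pi.single i 1) (Pi.single j 1) = A i j • w) : μ = formProduct A w := by
  apply ContinuousLinearMap.coe_injective
  refine (Pi.basisFun 𝕜 n).ext fun i => ContinuousLinearMap.coe_injective ?_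
  refine (Pi.basisFun 𝕜 n).ext fun j => ?_
  simp [h, formProduct_apply]

theorem continuous_formProduct (w : n → 𝕜) :
    Continuous fun A : Matrix n n 𝕜 => formProduct A w := by
  let formProductₗ : Matrix n n 𝕜 →ₗ[𝕜] (n → 𝕜) →L[𝕜] (n → 𝕜) →L[𝕜] n → 𝕜 :=
    { toFun := fun A => formProduct A w
      map_add' := fun A B => by
        ext : 2
        simp [formProduct_apply, add_mulVec, add_smul]
      map_smul' := fun c A => by
        ext : 2
        simp [formProduct_apply, smul_mulVec, mul_smul] }
  exact LinearMap.continuous_of_finiteDimensional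
    (F' := (n → 𝕜) →L[𝕜] (n → 𝕜) →L[𝕜] n → 𝕜) formProductₗ

end FormProduct

theorem formProduct_congr_mem_orbit (A : Matrix (Fin 4) (Fin 4) ℂ)
    {P : Matrix (Fin 4) (Fin 4) ℂ} (hP : IsUnit P) (v : V) :
    formProduct (Pᵀ * A * P) v ∈ orbit (formProduct A (P *ᵥ v)) := by
  let g : V ≃L[ℂ] V := (P.toLinearEquiv' hP.invertible).toContinuousLinearEquiv
  have hg (x : V) : g x = P *ᵥ x := rfl
  refine ⟨g.symm, fun x y => ?_⟩
  rw [ContinuousLinearEquiv.symm_symm, ContinuousLinearEquiv.eq_symm_apply]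
  simp only [formProduct_apply, hg, mulVec_smul]
  rw [← mulVec_mulVec, ← mulVec_mulVec, dotProduct_transpose_mulVec, dotProduct_comm]

theorem formProduct_congr_mem_closure_orbit (A : Matrix (Fin 4) (Fin 4) ℂ)
    {P : Matrix (Fin 4) (Fin 4) ℂ} {v w : V} (hPv : P *ᵥ v = w) (hw : w ≠ 0) :
    formProduct (Pᵀ * A * P) v ∈ closure (orbit (formProduct A w)) := by
  let pullback (Q : Matrix (Fin 4) (Fin 4) ℂ) := formProduct (Qᵀ * A * Q) v
  have hcont : Continuous pullback := (continuous_formProduct v).comp (by fun_prop)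
  change pullback P ∈ _
  refine map_mem_closure hcont (mem_closure_setOf_isUnit_and_mulVec_eq hPv hw) ?_
  rintro Q ⟨hQ, rfl⟩
  exact formProduct_congr_mem_orbit A hQ v

/-- The matrix of the bilinear form of `𝔑₃(α)`, whose products are multiples of `e₄`. -/
def matrixN₃ (α : ℂ) : Matrix (Fin 4) (Fin 4) ℂ :=
  !![1, α, 0, 0; -α, 1, 0, 0; 0, 0, 1, 0; 0, 0, 0, 0]

/-- The matrix of the bilinear form of `𝔑₂^ℂ(β)`, whose products are multiples of `e₃`. -/
def matrixN₂ (β : ℂ) : Matrix (Fin 4) (Fin 4) ℂ :=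
  !![1, 1, 0, 0; 0, β, 0, 0; 0, 0, 0, 0; 0, 0, 0, 0]

theorem exists_congr_matrixN₃_eq_matrixN₂ {α : ℂ} (hα : α ≠ 0) (β : ℂ) :
    ∃ P : Matrix (Fin 4) (Fin 4) ℂ, Pᵀ * matrixN₃ α * P = matrixN₂ β ∧ P *ᵥ e 2 = e 3 := by
  obtain ⟨s, hs⟩ := IsAlgClosed.exists_pow_nat_eq (β - (1 / 2) ^ 2 - (1 / (2 * α)) ^ 2) two_pos
  have hαb : α * (1 / (2 * α)) = 1 / 2 := by field_simp
  generalize 1 / (2 * α) = b at hs hαb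
  -- A second column `(a, b, s, 0)` must satisfy `a + α b = 1`, `a - α b = 0`, `a² + b² + s² = β`.
  refine ⟨!![1, 1 / 2, 0, 0; 0, b, 0, 0; 0, s, 0, 0; 0, 0, 1, 0], ?_, ?_⟩
  · ext i j
    fin_cases i <;> fin_cases j <;>
      simp [matrixN₃, matrixN₂, Matrix.mul_apply, Fin.sum_univ_four] <;> grind
  · ext i
    fin_cases i <;> simp [e]

/-- For every α ≠ 0 and every β, 𝔑₃(α) degenerates to 𝔑₂^ℂ(β). -/
theorem stmt12 (α β : ℂ) (hα : α ≠ 0) (μ lam : V →L[ℂ] V →L[ℂ] V)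
    (hμ : ∀ i j : Fin 4, μ (e i) (e j) =
    (![
      ![e 3, α • e 3, 0, 0],
      ![(-α) • e 3, e 3, 0, 0],
      ![0, 0, e 3, 0],
      ![0, 0, 0, 0]
     ] : Fin 4 → Fin 4 → V) i j)
    (hlam : ∀ i j : Fin 4, lam (e i) (e j) =
    (![
      ![e 2, e 2, 0, 0],
      ![0, β • e 2, 0, 0],
      ![0, 0, 0, 0],
      ![0, 0, 0, 0]
     ] : Fin 4 → Fin 4 → V) i j) :
    lam ∈ closure (orbit μ) := by
  obtain ⟨P, hcongr, hPe⟩ := exists_congr_matrixN₃_eq_matrixN₂ hα β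
  have hμ_form : μ = formProduct (matrixN₃ α) (e 3) :=
    eq_formProduct_of_apply_single fun i j => (hμ i j).trans <| by
      fin_cases i <;> fin_cases j <;> simp [matrixN₃]
  have hlam_form : lam = formProduct (matrixN₂ β) (e 2) :=
    eq_formProduct_of_apply_single fun i j => (hlam i j).trans <| by
      fin_cases i <;> fin_cases j <;> simp [matrixN₂]
  have he : e 3 ≠ 0 := by simp [e]
  rw [hμ_form, hlam_form, ← hcongr]
  exact formProduct_congr_mem_closure_orbit (matrixN₃ α) hPe he
end
end

section
/- For every γ ∈ ℂ, the algebra 𝔏₅ degenerates to 𝔑₂(γ): the structure λ_γ with table e₁e₁ = e₃, e₁e₂ = e₄, e₂e₁ = −γe₃, e₂e₂ = −e₄ lies in the closure of the GL(V)-orbit of the structure μ with table e₁e₁ = e₃, e₂e₁ = e₃, e₂e₂ = e₄, e₃e₁ = e₄. -/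
noncomputable section

/-!
For `m ≠ 0, 1` and `s ≠ 0` there is a basis of `V` in which 𝔏₅ has the multiplication table of
𝔑₂(m), except for the one extra product `e₃e₁ = -s(1 - m)³e₄`. These tables depend polynomially on
`(m, s)` and give 𝔑₂(γ) at `(γ, 0)`. Since the admissible parameters are dense in `ℂ × ℂ`, every
𝔑₂(γ) is a limit of points of the orbit of 𝔏₅, including the excluded values `γ = 0, 1`.
-/

section OfTable

variable (𝕜 : Type*) {ι F : Type*} [NontriviallyNormedField 𝕜] [Fintype ι] [NormedAddCommGroup F]
  [NormedSpace 𝕜 F]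

/-- The bilinear map on `𝕜^ι` with a prescribed multiplication table: it sends the pair of `i`-th
and `j`-th standard basis vectors to `T i j`. -/
def ofTable (T : ι → ι → F) : (ι → 𝕜) →L[𝕜] (ι → 𝕜) →L[𝕜] F :=
  ∑ i, ∑ j, (ContinuousLinearMap.proj i).smulRight ((ContinuousLinearMap.proj j).smulRight (T i j))

variable {𝕜}

theorem ofTable_apply (T : ι → ι → F) (x y : ι → 𝕜) :
    ofTable 𝕜 T x y = ∑ i, ∑ j, x i • y j • T i j := by
  simp [ofTable]

theorem map_sum_smul_sum_smul {κ E E' : Type*} [Fintype κ] [NormedAddCommGroup E]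
    [NormedSpace 𝕜 E] [NormedAddCommGroup E'] [NormedSpace 𝕜 E'] (μ : E →L[𝕜] E' →L[𝕜] F)
    (v : ι → E) (w : κ → E') (x : ι → 𝕜) (y : κ → 𝕜) :
    μ (∑ i, x i • v i) (∑ j, y j • w j) = ∑ i, ∑ j, x i • y j • μ (v i) (w j) := by
  rw [map_sum μ, sum_apply]
  simp only [map_smul, smul_apply, map_sum, smul_comm (y _)]

theorem eq_ofTable [DecidableEq ι] {μ : (ι → 𝕜) →L[𝕜] (ι → 𝕜) →L[𝕜] F} {T : ι → ι → F}
    (hμ : ∀ i j, μ (Pi.single i 1) (Pi.single j 1) = T i j) : μ = ofTable 𝕜 T := by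
  ext x y
  conv_lhs => rw [pi_eq_sum_univ' x, pi_eq_sum_univ' y]
  simp only [map_sum_smul_sum_smul, hμ, ofTable_apply]

@[fun_prop]
theorem continuous_smulRight {E : Type*} [NormedAddCommGroup E] [NormedSpace 𝕜 E] (c : E →L[𝕜] 𝕜) :
    Continuous fun v : F => c.smulRight v :=
  (ContinuousLinearMap.smulRightL 𝕜 E F c).continuous

set_option maxSynthPendingDepth 3 in
theorem continuous_ofTable :
    Continuous (ofTable 𝕜 : (ι → ι → F) → (ι → 𝕜) →L[𝕜] (ι → 𝕜) →L[𝕜] F) := by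
  unfold ofTable
  fun_prop

end OfTable

theorem ofTable_mem_orbit {μ : V →L[ℂ] V →L[ℂ] V} {T : Fin 4 → Fin 4 → V} {b : Fin 4 → V}
    (hb : LinearIndependent ℂ b) (hμ : ∀ i j, μ (b i) (b j) = ∑ k, T i j k • b k) :
    ofTable ℂ T ∈ orbit μ := by
  let B := basisOfLinearIndependentOfCardEqFinrank hb (by simp)
  have hB : ⇑B = b := coe_basisOfLinearIndependentOfCardEqFinrank hb _
  let g : V ≃L[ℂ] V := B.equivFun.toContinuousLinearEquiv
  have g_symm (x : V) : g.symm x = ∑ i, x i • b i := hB ▸ B.equivFun_symm_apply x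
  have g_mul (i j : Fin 4) : g (μ (b i) (b j)) = T i j := by
    rw [hμ, ← g_symm, g.apply_symm_apply]
  refine ⟨g, fun x y => ?_⟩
  rw [ofTable_apply, g_symm, g_symm, map_sum_smul_sum_smul]
  simp only [map_sum, map_smul, g_mul]

/-- The multiplication table of 𝔏₅. -/
def l5Table : Fin 4 → Fin 4 → V :=
  ![![e 2, 0, 0, 0],
    ![e 2, e 3, 0, 0],
    ![e 3, 0, 0, 0],
    ![0, 0, 0, 0]]

/-- The multiplication table of 𝔑₂(m), deformed by the extra product `e₃e₁ = -s(1 - m)³e₄`. -/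
def n2DeformationTable (m s : ℂ) : Fin 4 → Fin 4 → V :=
  ![![e 2, e 3, 0, 0],
    ![(-m) • e 2, -e 3, 0, 0],
    ![-(s * (1 - m) ^ 3) • e 3, 0, 0, 0],
    ![0, 0, 0, 0]]

/-- The matrix whose rows are the vectors in which 𝔏₅ has the multiplication table
`n2DeformationTable m s`. The `e₃`-entries of the first two rows cancel the `e₄`-components of the
products of these rows with the first one. -/
def n2DeformationBasis (m s : ℂ) : Matrix (Fin 4) (Fin 4) ℂ :=
  let r := s * m ^ 2
  !![r * (1 - m) ^ 2, r * m * (1 - m), -(r * m ^ 2), 0;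
    0, -(r * m * (1 - m)), r * m ^ 2, 0;
    0, 0, r ^ 2 * (1 - m) ^ 3, 0;
    0, 0, 0, -(r ^ 2 * m ^ 2 * (1 - m) ^ 2)]

theorem ofTable_l5Table_apply (x y : V) :
    ofTable ℂ l5Table x y = ![0, 0, (x 0 + x 1) * y 0, x 1 * y 1 + x 2 * y 0] := by
  ext k
  fin_cases k <;> simp [ofTable_apply, l5Table, e, Fin.sum_univ_four, add_mul]

theorem ofTable_l5Table_n2DeformationBasis (m s : ℂ) (i j : Fin 4) :
    ofTable ℂ l5Table (n2DeformationBasis m s i) (n2DeformationBasis m s j) =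
      ∑ k, n2DeformationTable m s i j k • n2DeformationBasis m s k := by
  rw [ofTable_l5Table_apply]
  ext k
  fin_cases i <;> fin_cases j <;> fin_cases k <;>
    simp [n2DeformationBasis, n2DeformationTable, e, Fin.sum_univ_four] <;> ring

theorem det_n2DeformationBasis (m s : ℂ) :
    (n2DeformationBasis m s).det = s ^ 6 * m ^ 15 * (1 - m) ^ 8 := by
  have upperTriangular : (n2DeformationBasis m s).IsUpperTriangular := by
    intro i j (hij : j < i)
    fin_cases i <;> fin_cases j <;> first | rfl | simp at hij
  rw [Matrix.det_of_isUpperTriangular upperTriangular]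
  simp only [n2DeformationBasis, Fin.prod_univ_four, Matrix.of_apply, Matrix.cons_val]
  ring

theorem linearIndependent_n2DeformationBasis {m s : ℂ} (hm₀ : m ≠ 0) (hm₁ : m ≠ 1) (hs : s ≠ 0) :
    LinearIndependent ℂ (n2DeformationBasis m s) := by
  refine Matrix.linearIndependent_rows_of_det_ne_zero ?_
  rw [det_n2DeformationBasis]
  have : 1 - m ≠ 0 := sub_ne_zero.2 hm₁.symm
  simp [hs, hm₀, this]

theorem ofTable_n2DeformationTable_mem_orbit {m s : ℂ} (hm₀ : m ≠ 0) (hm₁ : m ≠ 1) (hs : s ≠ 0) :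
    ofTable ℂ (n2DeformationTable m s) ∈ orbit (ofTable ℂ l5Table) :=
  ofTable_mem_orbit (linearIndependent_n2DeformationBasis hm₀ hm₁ hs)
    (ofTable_l5Table_n2DeformationBasis m s)

theorem continuous_n2DeformationTable :
    Continuous fun p : ℂ × ℂ => n2DeformationTable p.1 p.2 := by
  unfold n2DeformationTable
  fun_prop

theorem dense_n2DeformationParameters : Dense (({0, 1}ᶜ : Set ℂ) ×ˢ ({0}ᶜ : Set ℂ)) :=
  ((Set.toFinite ({0, 1} : Set ℂ)).countable.dense_compl ℂ).prod (dense_compl_singleton 0)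

theorem ofTable_n2DeformationTable_mem_closure_orbit (m s : ℂ) :
    ofTable ℂ (n2DeformationTable m s) ∈ closure (orbit (ofTable ℂ l5Table)) := by
  have continuous_structure : Continuous fun p : ℂ × ℂ => ofTable ℂ (n2DeformationTable p.1 p.2) :=
    continuous_ofTable.comp continuous_n2DeformationTable
  have mapsTo_orbit : Set.MapsTo (fun p : ℂ × ℂ => ofTable ℂ (n2DeformationTable p.1 p.2))
      ({0, 1}ᶜ ×ˢ {0}ᶜ) (orbit (ofTable ℂ l5Table)) := fun _ ⟨hm, hs⟩ =>
    ofTable_n2DeformationTable_mem_orbit (fun h => hm (.inl h)) (fun h => hm (.inr h)) hs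
  exact (map_mem_closure continuous_structure (dense_n2DeformationParameters (m, s)) mapsTo_orbit :)

/-- For every γ ∈ ℂ, 𝔏₅ degenerates to 𝔑₂(γ). -/
theorem stmt15 (γ : ℂ) (μ lam : V →L[ℂ] V →L[ℂ] V)
    (hμ : ∀ i j : Fin 4, μ (e i) (e j) =
    (![
      ![e 2, 0, 0, 0],
      ![e 2, e 3, 0, 0],
      ![e 3, 0, 0, 0],
      ![0, 0, 0, 0]
     ] : Fin 4 → Fin 4 → V) i j)
    (hlam : ∀ i j : Fin 4, lam (e i) (e j) =
    (![
      ![e 2, e 3, 0, 0],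
      ![(-γ) • e 2, -e 3, 0, 0],
      ![0, 0, 0, 0],
      ![0, 0, 0, 0]
     ] : Fin 4 → Fin 4 → V) i j) :
    lam ∈ closure (orbit μ) := by
  have hμ_table : μ = ofTable ℂ l5Table := eq_ofTable hμ
  have hlam_table : lam = ofTable ℂ (n2DeformationTable γ 0) :=
    eq_ofTable fun i j => (hlam i j).trans (by simp [n2DeformationTable])
  rw [hμ_table, hlam_table]
  exact ofTable_n2DeformationTable_mem_closure_orbit γ 0
end
end

section
/- The algebra 𝔏₁₁ degenerates to 𝔏₁₀: the structure λ with table e₁e₂ = −e₃, e₁e₃ = −e₄, e₂e₁ = e₃, e₂e₂ = e₄, e₃e₁ = e₄ lies in the closure of the GL(V)-orbit of the structure μ with table e₁e₁ = e₄, e₁e₂ = −e₃, e₁e₃ = −e₄, e₂e₁ = e₃, e₂e₂ = e₄, e₃e₁ = e₄. -/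
noncomputable section

/-!
Give `e₁, e₂, e₃, e₄` the weights `1, 2, 3, 4`. Every product in the table of `𝔏₁₀` adds weights,
and the only other product in the table of `𝔏₁₁`, namely `e₁e₁ = e₄`, raises the weight by `2`.
Transporting `𝔏₁₁` along the one-parameter subgroup `diag(s, s², s³, s⁴)` therefore fixes the
`𝔏₁₀` part and multiplies the remaining product by `s²`, and letting `s → 0` gives `𝔏₁₀`.
-/

section WeightHomogeneous

variable {ι 𝕜 : Type*} [NontriviallyNormedField 𝕜]

/-- The value at `u` of the one-parameter subgroup `diag(u ^ w i)` of `GL(𝕜^ι)` with weights `w`. -/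
def weightScaling (w : ι → ℤ) (u : 𝕜ˣ) : (ι → 𝕜) ≃L[𝕜] (ι → 𝕜) :=
  ContinuousLinearEquiv.piCongrRight fun i => ContinuousLinearEquiv.unitsEquivAut 𝕜 (u ^ w i)

theorem weightScaling_apply (w : ι → ℤ) (u : 𝕜ˣ) (x : ι → 𝕜) (i : ι) :
    weightScaling w u x i = (u : 𝕜) ^ w i * x i := by
  simp [weightScaling, mul_comm]

variable [DecidableEq ι]

/-- A bilinear map on `𝕜^ι` is homogeneous of degree `d` for the weights `w` if the product of basis
vectors of weights `a` and `b` lies in the span of the basis vectors of weight `a + b + d`. This is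
expressed through the structure constants. -/
def IsWeightHomogeneous (w : ι → ℤ) (d : ℤ) (β : (ι → 𝕜) →L[𝕜] (ι → 𝕜) →L[𝕜] (ι → 𝕜)) : Prop :=
  ∀ i j k, β (Pi.single i 1) (Pi.single j 1) k ≠ 0 → w k = w i + w j + d

theorem bilin_apply_eq_sum [Fintype ι] (β : (ι → 𝕜) →L[𝕜] (ι → 𝕜) →L[𝕜] (ι → 𝕜))
    (x y : ι → 𝕜) (k : ι) :
    β x y k = ∑ i, ∑ j, x i * y j * β (Pi.single i 1) (Pi.single j 1) k := by
  conv_lhs => rw [pi_eq_sum_univ' x, pi_eq_sum_univ' y]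
  simp only [map_sum, map_smul, sum_apply, smul_apply, Finset.sum_apply, Pi.smul_apply,
    smul_eq_mul, Finset.mul_sum]
  rw [Finset.sum_comm]
  exact Finset.sum_congr rfl fun i _ => Finset.sum_congr rfl fun j _ => by ring

namespace IsWeightHomogeneous

variable [Finite ι] {w : ι → ℤ} {d : ℤ} {β : (ι → 𝕜) →L[𝕜] (ι → 𝕜) →L[𝕜] (ι → 𝕜)}

theorem smul_apply_weightScaling (hβ : IsWeightHomogeneous w d β) (u : 𝕜ˣ) (x y : ι → 𝕜) :
    (u : 𝕜) ^ d • β (weightScaling w u x) (weightScaling w u y) = weightScaling w u (β x y) := by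
  have := Fintype.ofFinite ι
  ext k
  rw [Pi.smul_apply, smul_eq_mul, weightScaling_apply, bilin_apply_eq_sum β x y,
    bilin_apply_eq_sum β (weightScaling w u x)]
  simp only [weightScaling_apply, Finset.mul_sum]
  refine Finset.sum_congr rfl fun i _ => Finset.sum_congr rfl fun j _ => ?_
  by_cases hijk : β (Pi.single i 1) (Pi.single j 1) k = 0
  · simp [hijk]
  · rw [hβ i j k hijk, zpow_add₀ u.ne_zero, zpow_add₀ u.ne_zero]
    ring

theorem weightScaling_conj (hβ : IsWeightHomogeneous w d β) (u : 𝕜ˣ) (x y : ι → 𝕜) :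
    weightScaling w u (β ((weightScaling w u).symm x) ((weightScaling w u).symm y)) =
      (u : 𝕜) ^ d • β x y := by
  simp [← hβ.smul_apply_weightScaling]

end IsWeightHomogeneous

end WeightHomogeneous

theorem mem_closure_of_add_sum_pow_smul_mem {𝕜 E : Type*} [NontriviallyNormedField 𝕜]
    [AddCommGroup E] [Module 𝕜 E] [TopologicalSpace E] [ContinuousAdd E] [ContinuousSMul 𝕜 E]
    {S : Set E} {a : E} {D : Finset ℕ} {b : ℕ → E} (hD : 0 ∉ D)
    (hS : ∀ s : 𝕜, s ≠ 0 → a + ∑ d ∈ D, s ^ d • b d ∈ S) : a ∈ closure S := by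
  have hcont : Continuous fun s : 𝕜 => a + ∑ d ∈ D, s ^ d • b d := by fun_prop
  have hzero : a + ∑ d ∈ D, (0 : 𝕜) ^ d • b d = a := by
    rw [Finset.sum_eq_zero, add_zero]
    intro d hd
    rw [zero_pow (ne_of_mem_of_not_mem hd hD), zero_smul]
  have hmem := map_mem_closure hcont (dense_compl_singleton (0 : 𝕜) 0) hS
  rwa [hzero] at hmem

section Degeneration

variable {w : Fin 4 → ℤ} {lam : V →L[ℂ] V →L[ℂ] V} {D : Finset ℕ} {β : ℕ → V →L[ℂ] V →L[ℂ] V}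

theorem add_sum_pow_smul_mem_orbit (hlam : IsWeightHomogeneous w 0 lam)
    (hβ : ∀ d ∈ D, IsWeightHomogeneous w d (β d)) {s : ℂ} (hs : s ≠ 0) :
    lam + ∑ d ∈ D, s ^ d • β d ∈ orbit (lam + ∑ d ∈ D, β d) := by
  refine ⟨weightScaling w (Units.mk0 s hs), fun x y => ?_⟩
  simp only [add_apply, sum_apply, smul_apply, map_add, map_sum, hlam.weightScaling_conj,
    zpow_zero, one_smul]
  congr 1
  refine Finset.sum_congr rfl fun d hd => ?_
  rw [(hβ d hd).weightScaling_conj, Units.val_mk0, zpow_natCast]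

theorem mem_closure_orbit_add_sum (hlam : IsWeightHomogeneous w 0 lam)
    (hβ : ∀ d ∈ D, IsWeightHomogeneous w d (β d)) (hD : 0 ∉ D) :
    lam ∈ closure (orbit (lam + ∑ d ∈ D, β d)) :=
  mem_closure_of_add_sum_pow_smul_mem (𝕜 := ℂ) (E := V →L[ℂ] V →L[ℂ] V) hD fun _ hs =>
    add_sum_pow_smul_mem_orbit hlam hβ hs

end Degeneration

/-- 𝔏₁₁ degenerates to 𝔏₁₀. -/
theorem stmt16 (μ lam : V →L[ℂ] V →L[ℂ] V)
    (hμ : ∀ i j : Fin 4, μ (e i) (e j) =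
    (![
      ![e 3, -e 2, -e 3, 0],
      ![e 2, e 3, 0, 0],
      ![e 3, 0, 0, 0],
      ![0, 0, 0, 0]
     ] : Fin 4 → Fin 4 → V) i j)
    (hlam : ∀ i j : Fin 4, lam (e i) (e j) =
    (![
      ![0, -e 2, -e 3, 0],
      ![e 2, e 3, 0, 0],
      ![e 3, 0, 0, 0],
      ![0, 0, 0, 0]
     ] : Fin 4 → Fin 4 → V) i j) :
    lam ∈ closure (orbit μ) := by
  let w : Fin 4 → ℤ := ![1, 2, 3, 4]
  have hlam_homogeneous : IsWeightHomogeneous w 0 lam := by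
    intro i j k
    change lam (e i) (e j) k ≠ 0 → _
    rw [hlam]
    fin_cases i <;> fin_cases j <;> fin_cases k <;> simp [e, w]
  have hdiff_homogeneous : IsWeightHomogeneous w 2 (μ - lam) := by
    intro i j k
    change μ (e i) (e j) k - lam (e i) (e j) k ≠ 0 → _
    rw [hμ, hlam]
    fin_cases i <;> fin_cases j <;> fin_cases k <;> simp [e, w]
  have hmem := mem_closure_orbit_add_sum (D := {2}) (β := fun _ => μ - lam) hlam_homogeneous
    (by simpa using hdiff_homogeneous) (by simp)
  rwa [Finset.sum_singleton, show lam + (μ - lam) = μ from add_sub_cancel lam μ] at hmem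
end
end
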